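/- Memorization by Step networks under F_p: for any p ∈ ℕ, d ≤ 2^p, and n ∈ ℕ, there exists a 3-layer Step-network architecture with 6dn + 2n parameters, with all parameters in F_p and all affine operations performed as floating-point operations in F_p with round-to-nearest, such that for every dataset D = {(z_1, y_1), …, (z_n, y_n)} ⊂ F_p^d × F_p with z_i ≠ z_j for i ≠ j, there is a parameter assignment θ_D with f_{θ_D}(z_i) = y_i for all i ∈ [n]. -/

import Mathlib

/-- `F_p`: binary floating-point numbers with `(p+1)`-bit significand and
unbounded exponent, together with `0`: reals of the form `±m·2^e` with
`2^p ≤ m < 2^(p+1)`, `e : ℤ`. -/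
def Fp (p : ℕ) : Set ℝ :=
  {x | x = 0 ∨ ∃ (s : ℤ) (m : ℕ) (e : ℤ), (s = 1 ∨ s = -1) ∧
    2 ^ p ≤ m ∧ m < 2 ^ (p + 1) ∧ x = (s : ℝ) * m * (2 : ℝ) ^ e}

/-- `z` has an even last significand bit (or is zero). -/
def EvenSigFp (p : ℕ) (z : ℝ) : Prop :=
  z = 0 ∨ ∃ (s : ℤ) (m : ℕ) (e : ℤ), (s = 1 ∨ s = -1) ∧
    2 ^ p ≤ m ∧ m < 2 ^ (p + 1) ∧ m % 2 = 0 ∧ z = (s : ℝ) * m * (2 : ℝ) ^ e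

/-- `z` is the round-to-nearest (ties to even) value of `r` in `F_p`. -/
def RoundsTo (p : ℕ) (r z : ℝ) : Prop :=
  z ∈ Fp p ∧ (∀ w ∈ Fp p, |r - z| ≤ |r - w|) ∧
    ((∃ w ∈ Fp p, w ≠ z ∧ |r - w| = |r - z|) → EvenSigFp p z)

/-- A feedforward architecture on `d` inputs: `L` layers, layer widths, and
for each neuron in layer `l+1` (and the output neuron in layer `L`) a set of
indices of the previous layer's neurons (index `width l` denoting the bias
input `1`) that it is connected to; each connection carries one free
parameter. -/
structure Arch (d : ℕ) where
  L : ℕ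
  width : ℕ → ℕ
  input_eq : width 0 = d
  output_eq : width L = 1
  idx : ℕ → ℕ → Finset ℕ
  idx_sub : ∀ l i, idx (l + 1) i ⊆ Finset.range (width l + 1)

/-- Total number of free parameters of an architecture. -/
def Arch.nParams {d : ℕ} (A : Arch d) : ℕ :=
  ∑ l ∈ Finset.range A.L, ∑ i ∈ Finset.range (A.width (l + 1)), (A.idx (l + 1) i).card

/-- Floating-point affine map: each product `w j * v j` is rounded, and the
partial sums are accumulated left-to-right with each partial sum rounded. -/
noncomputable def fpAff (rnd : ℝ → ℝ) (w v : ℕ → ℝ) (s : List ℕ) : ℝ :=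
  s.foldl (fun a j => rnd (a + rnd (w j * v j))) 0

/-- Post-activation values of layer `l` (augmented with the bias value `1` at
index `width l`), computed with rounded floating-point operations. -/
noncomputable def postAct {d : ℕ} (A : Arch d) (σ rnd : ℝ → ℝ)
    (θ : ℕ → ℕ → ℕ → ℝ) (x : ℕ → ℝ) : ℕ → ℕ → ℝ
  | 0 => fun j => if j = A.width 0 then 1 else x j
  | l + 1 => fun j =>
      if j = A.width (l + 1) then 1
      else rnd (σ (fpAff rnd (θ (l + 1) j) (postAct A σ rnd θ x l)
        ((A.idx (l + 1) j).sort (· ≤ ·))))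

/-- Network output: the (pre-activation) affine output of the last layer. -/
noncomputable def evalNet {d : ℕ} (A : Arch d) (σ rnd : ℝ → ℝ)
    (θ : ℕ → ℕ → ℕ → ℝ) (x : ℕ → ℝ) : ℝ :=
  fpAff rnd (θ A.L 0) (postAct A σ rnd θ x (A.L - 1)) ((A.idx A.L 0).sort (· ≤ ·))

/-- The binary threshold activation `Step(t) = 1[t ≥ 0]`. -/
noncomputable def stepAct : ℝ → ℝ := fun t => if 0 ≤ t then 1 else 0

/-!
A label is reproduced by recognizing the input. For each data point `z i` and each coordinate `j`,
two first-layer neurons test `z i j ≤ x j` and `x j ≤ z i j`; a second-layer neuron takes the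
conjunction of the `2 * d` tests of its point, so it fires exactly when `x` agrees with `z i`; the
output neuron weights these one-hot indicators by the labels.

Floating-point arithmetic does no harm for three different reasons. A first-layer neuron makes a
single inexact operation, the final subtraction, and rounding preserves its sign. In the second
layer all partial sums are integers of absolute value at most `2 * d ≤ 2 ^ (p + 1)`, which lie in
`F_p`. In the last layer every partial sum is `0` or a label.
-/

theorem exists_extension_mem {ι α β : Type*} {e : ι → α} (he : e.Injective) {S : Set β}
    (hS : S.Nonempty) {f : ι → β} (hf : ∀ a, f a ∈ S) :
    ∃ g : α → β, (∀ a, g a ∈ S) ∧ ∀ a, g (e a) = f a := by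
  obtain ⟨c, hc⟩ := hS
  refine ⟨Function.extend e f fun _ => c, fun a => ?_, he.extend_apply f _⟩
  by_cases ha : ∃ b, e b = a
  · obtain ⟨b, rfl⟩ := ha
    rw [he.extend_apply]
    exact hf b
  · rwa [Function.extend_apply' _ _ _ ha]

namespace Fp

variable {p : ℕ} {x : ℝ}

theorem zero_mem (p : ℕ) : (0 : ℝ) ∈ Fp p := Or.inl rfl

theorem neg_mem (hx : x ∈ Fp p) : -x ∈ Fp p := by
  rcases hx with rfl | ⟨s, m, e, hs, hm, hm', rfl⟩
  · simpa using zero_mem p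
  · refine Or.inr ⟨-s, m, e, ?_, hm, hm', by push_cast; ring⟩
    rcases hs with rfl | rfl <;> simp

theorem neg_one_pow_mul_mem (hx : x ∈ Fp p) (k : ℕ) : (-1) ^ k * x ∈ Fp p := by
  rcases neg_one_pow_eq_or ℝ k with h | h
  · simpa [h] using hx
  · simpa [h] using neg_mem hx

theorem two_zpow_mem (p : ℕ) (k : ℤ) : (2 : ℝ) ^ k ∈ Fp p := by
  refine Or.inr ⟨1, 2 ^ p, k - p, Or.inl rfl, le_rfl, Nat.pow_lt_pow_succ one_lt_two, ?_⟩
  push_cast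
  rw [one_mul, ← zpow_natCast, ← zpow_add₀ two_ne_zero, add_sub_cancel]

theorem one_mem (p : ℕ) : (1 : ℝ) ∈ Fp p := by simpa using two_zpow_mem p 0

theorem subset_succ (p : ℕ) : Fp p ⊆ Fp (p + 1) := by
  rintro x (rfl | ⟨s, m, e, hs, hm, hm', rfl⟩)
  · exact zero_mem _
  · refine Or.inr ⟨s, 2 * m, e - 1, hs, by grind, by grind, ?_⟩
    rw [zpow_sub_one₀ two_ne_zero]
    push_cast
    ring

theorem natCast_mem {m : ℕ} (hm : m ≤ 2 ^ (p + 1)) : (m : ℝ) ∈ Fp p := by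
  rcases hm.eq_or_lt with rfl | hlt
  · exact_mod_cast two_zpow_mem p (p + 1 : ℕ)
  rcases le_or_gt (2 ^ p) m with hle | hlt'
  · exact Or.inr ⟨1, m, 0, Or.inl rfl, hle, hlt, by simp⟩
  induction p with
  | zero => simpa [Nat.lt_one_iff.mp hlt'] using zero_mem 0
  | succ p ih =>
    refine subset_succ p ?_
    rcases le_or_gt (2 ^ p) m with hle | hlt''
    · exact Or.inr ⟨1, m, 0, Or.inl rfl, hle, hlt', by simp⟩
    · exact ih hlt'.le hlt' hlt''

theorem intCast_mem {m : ℤ} (hm : |m| ≤ 2 ^ (p + 1)) : (m : ℝ) ∈ Fp p := by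
  obtain ⟨k, rfl | rfl⟩ := m.eq_nat_or_neg
  · exact_mod_cast natCast_mem (by zify; simpa using hm)
  · rw [Int.cast_neg, Int.cast_natCast]
    exact neg_mem (natCast_mem (by zify; simpa using hm))

end Fp

namespace RoundsTo

variable {p : ℕ} {r z : ℝ}

theorem eq_self (h : RoundsTo p r z) (hr : r ∈ Fp p) : z = r := by
  have hdist : |r - z| ≤ 0 := by simpa using h.2.1 r hr
  exact (sub_eq_zero.mp (abs_nonpos_iff.mp hdist)).symm

theorem nonneg (h : RoundsTo p r z) (hr : 0 ≤ r) : 0 ≤ z := by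
  by_contra! hz
  have hdist : |r - z| ≤ |r - 0| := h.2.1 0 (Fp.zero_mem p)
  rw [abs_of_pos (by linarith), abs_of_nonneg (by linarith)] at hdist
  linarith

theorem neg (h : RoundsTo p r z) (hr : r < 0) : z < 0 := by
  -- The exponent is unbounded, so some `-2 ^ k` lies in `[r, 0)` and is closer to `r` than `0` is.
  by_contra! hz
  obtain ⟨k, hk, -⟩ := exists_mem_Ico_zpow (neg_pos.mpr hr) (one_lt_two (α := ℝ))
  have hpos : (0 : ℝ) < 2 ^ k := by positivity
  have hdist : |r - z| ≤ |r - -2 ^ k| := h.2.1 _ (Fp.neg_mem (Fp.two_zpow_mem p k))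
  rw [abs_of_neg (by linarith), abs_of_nonpos (by linarith)] at hdist
  linarith

theorem nonneg_iff (h : RoundsTo p r z) : 0 ≤ z ↔ 0 ≤ r :=
  ⟨fun hz => not_lt.mp fun hr => (h.neg hr).not_ge hz, h.nonneg⟩

end RoundsTo

/-- The two properties of rounding that memorization relies on. They are shared by all the usual
rounding modes (to nearest with any rule for ties, toward zero, toward `±∞`), because `F_p` has
unbounded exponent. -/
structure IsSignExactRounding (p : ℕ) (rnd : ℝ → ℝ) : Prop where
  eq_self : ∀ r ∈ Fp p, rnd r = r
  nonneg_iff : ∀ r, 0 ≤ rnd r ↔ 0 ≤ r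

theorem isSignExactRounding_of_roundsTo {p : ℕ} {rnd : ℝ → ℝ} (h : ∀ r, RoundsTo p r (rnd r)) :
    IsSignExactRounding p rnd :=
  ⟨fun r => (h r).eq_self, fun r => (h r).nonneg_iff⟩

section FloatingPointSums

variable {rnd : ℝ → ℝ} {w v : ℕ → ℝ} {s : Finset ℕ}

theorem fpAff_append_singleton (rnd : ℝ → ℝ) (w v : ℕ → ℝ) (l : List ℕ) (k : ℕ) :
    fpAff rnd w v (l ++ [k]) = rnd (fpAff rnd w v l + rnd (w k * v k)) := by
  simp [fpAff]

theorem fpAff_eq_sum_of_sublist {l : List ℕ}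
    (h : ∀ l' : List ℕ, l'.Sublist l →
      rnd (l'.map fun k => w k * v k).sum = (l'.map fun k => w k * v k).sum) :
    fpAff rnd w v l = (l.map fun k => w k * v k).sum := by
  induction l using List.reverseRecOn with
  | nil => rfl
  | append_singleton l k ih =>
    have hprod : rnd (w k * v k) = w k * v k := by
      simpa using h [k] (List.sublist_append_right l [k])
    have hwhole := h (l ++ [k]) (List.Sublist.refl _)
    rw [fpAff_append_singleton, ih fun l' hl' => h l' (hl'.trans (List.sublist_append_left l [k])),
      hprod]
    simpa using hwhole

theorem fpAff_sort_eq_sum (h : ∀ t ⊆ s, rnd (∑ k ∈ t, w k * v k) = ∑ k ∈ t, w k * v k) :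
    fpAff rnd w v (s.sort (· ≤ ·)) = ∑ k ∈ s, w k * v k := by
  have hsum : ∀ l : List ℕ, l.Sublist (s.sort (· ≤ ·)) →
      (l.map fun k => w k * v k).sum = ∑ k ∈ l.toFinset, w k * v k := fun l hl =>
    (List.sum_toFinset _ (hl.nodup (s.sort_nodup (· ≤ ·)))).symm
  rw [fpAff_eq_sum_of_sublist fun l hl => ?_, hsum _ (List.Sublist.refl _), s.sort_toFinset]
  rw [hsum l hl]
  exact h _ fun k hk => (s.mem_sort (· ≤ ·)).mp (hl.subset (List.mem_toFinset.mp hk))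

theorem fpAff_sort_pair {j b : ℕ} (hjb : j < b) (hj : rnd (w j * v j) = w j * v j)
    (hb : rnd (w b * v b) = w b * v b) :
    fpAff rnd w v (({j, b} : Finset ℕ).sort (· ≤ ·)) = rnd (w j * v j + w b * v b) := by
  have hsort : ({j, b} : Finset ℕ).sort (· ≤ ·) = [j, b] := by
    rw [Finset.sort_insert (· ≤ ·) (by simpa using hjb.le) (by simpa using hjb.ne),
      Finset.sort_singleton]
  simp [hsort, fpAff, hj, hb]

theorem fpAff_sort_oneHot {i : ℕ} (hi : i ∈ s) (h0 : rnd 0 = 0) (hw : rnd (w i) = w i)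
    (hv : ∀ k ∈ s, v k = if k = i then 1 else 0) :
    fpAff rnd w v (s.sort (· ≤ ·)) = w i := by
  have hsum : ∀ t ⊆ s, ∑ k ∈ t, w k * v k = if i ∈ t then w i else 0 := fun t ht => by
    rw [Finset.sum_congr rfl fun k hk => by rw [hv k (ht hk)]]
    simp
  rw [fpAff_sort_eq_sum fun t ht => ?_, hsum s subset_rfl, if_pos hi]
  rw [hsum t ht]
  split_ifs
  exacts [hw, h0]

theorem fpAff_sort_conj_nonneg_iff {P : ℕ → Prop} [DecidablePred P] {b : ℕ} (hb : b ∉ s)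
    (hrnd : ∀ m : ℤ, |m| ≤ s.card → rnd m = m) (hw : ∀ k ∈ s, w k = 1) (hwb : w b = -s.card)
    (hv : ∀ k ∈ s, v k = if P k then 1 else 0) (hvb : v b = 1) :
    0 ≤ fpAff rnd w v ((insert b s).sort (· ≤ ·)) ↔ ∀ k ∈ s, P k := by
  have hsum : ∀ t ⊆ s, ∑ k ∈ t, w k * v k = (t.filter P).card := fun t ht => by
    rw [Finset.sum_congr rfl fun k hk => by rw [hw k (ht hk), hv k (ht hk), one_mul]]
    simp
  have hsum_insert : ∀ t ⊆ s,
      ∑ k ∈ insert b t, w k * v k = (((t.filter P).card - s.card : ℤ) : ℝ) := fun t ht => by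
    rw [Finset.sum_insert fun h => hb (ht h), hsum t ht, hwb, hvb]
    push_cast
    ring
  have hcard : ∀ t ⊆ s, (t.filter P).card ≤ s.card := fun t ht =>
    Finset.card_le_card ((Finset.filter_subset P t).trans ht)
  rw [fpAff_sort_eq_sum fun t ht => ?_, hsum_insert s subset_rfl, Int.cast_nonneg_iff, sub_nonneg,
    Nat.cast_le, (hcard s subset_rfl).ge_iff_eq, Finset.card_filter_eq_iff]
  have hts : t.erase b ⊆ s := Finset.subset_insert_iff.mp ht
  by_cases hbt : b ∈ t
  · rw [← Finset.insert_erase hbt, hsum_insert _ hts]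
    exact hrnd _ (by have := hcard _ hts; rw [abs_le]; omega)
  · rw [Finset.erase_eq_of_notMem hbt] at hts
    rw [hsum t hts]
    exact_mod_cast hrnd (t.filter P).card (by simpa using hcard t hts)

end FloatingPointSums

section StepActivation

variable {rnd : ℝ → ℝ}

theorem stepAct_eq_ite {t : ℝ} {P : Prop} [Decidable P] (h : 0 ≤ t ↔ P) :
    stepAct t = if P then 1 else 0 := by
  simp only [stepAct, h]

theorem stepAct_rnd (hrnd : ∀ r, 0 ≤ rnd r ↔ 0 ≤ r) (t : ℝ) : stepAct (rnd t) = stepAct t :=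
  stepAct_eq_ite (hrnd t)

theorem rnd_stepAct (h0 : rnd 0 = 0) (h1 : rnd 1 = 1) (t : ℝ) :
    rnd (stepAct t) = stepAct t := by
  unfold stepAct
  split_ifs
  exacts [h1, h0]

variable {d : ℕ} {A : Arch d} {σ : ℝ → ℝ} {θ : ℕ → ℕ → ℕ → ℝ} {x : ℕ → ℝ}

theorem postAct_bias (l : ℕ) : postAct A σ rnd θ x l (A.width l) = 1 := by
  cases l <;> simp [postAct]

theorem postAct_zero {j : ℕ} (hj : j < d) : postAct A σ rnd θ x 0 j = x j := by
  simp [postAct, A.input_eq, hj.ne]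

theorem postAct_stepAct_succ (h0 : rnd 0 = 0) (h1 : rnd 1 = 1) {l k : ℕ}
    (hk : k < A.width (l + 1)) :
    postAct A stepAct rnd θ x (l + 1) k =
      stepAct (fpAff rnd (θ (l + 1) k) (postAct A stepAct rnd θ x l)
        ((A.idx (l + 1) k).sort (· ≤ ·))) := by
  simp only [postAct, if_neg hk.ne, rnd_stepAct h0 h1]

end StepActivation

/-- The data point that neuron `k` of the first layer looks at: that neuron is numbered
`k = 2 * (d * i + j) + s`, where `i` is the data point, `j` the coordinate and `s < 2` tells which
of the two inequalities is tested. -/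
def neuronPoint (d k : ℕ) : ℕ := k / 2 / d

/-- The coordinate that neuron `k` of the first layer looks at. -/
def neuronCoord (d k : ℕ) : ℕ := k / 2 % d

/-- The neurons of the first layer that look at the data point `i`. -/
def pointBlock (d i : ℕ) : Finset ℕ := Finset.Ico (2 * d * i) (2 * d * (i + 1))

section Numbering

variable {d n i k : ℕ}

theorem neuronCoord_lt (hk : k < 2 * d * n) : neuronCoord d k < d :=
  Nat.mod_lt _ (Nat.pos_of_ne_zero fun hd => by simp [hd] at hk)

theorem card_pointBlock (d i : ℕ) : (pointBlock d i).card = 2 * d := by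
  rw [pointBlock, Nat.card_Ico, mul_add, mul_one, Nat.add_sub_cancel_left]

theorem lt_of_mem_pointBlock (hk : k ∈ pointBlock d i) (hi : i < n) : k < 2 * d * n :=
  (Finset.mem_Ico.mp hk).2.trans_le (Nat.mul_le_mul_left _ hi)

theorem notMem_pointBlock (hi : i < n) : 2 * d * n ∉ pointBlock d i := fun h =>
  (lt_of_mem_pointBlock h hi).false

theorem neuronPoint_of_mem_pointBlock (hk : k ∈ pointBlock d i) : neuronPoint d k = i := by
  obtain ⟨hle, hlt⟩ := Finset.mem_Ico.mp hk
  rw [neuronPoint, Nat.div_div_eq_div_mul]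
  exact Nat.div_eq_of_lt_le (by linarith) (by linarith)

theorem mem_pointBlock_and_neuronCoord {j s : ℕ} (hj : j < d) (hs : s < 2) (i : ℕ) :
    2 * (d * i + j) + s ∈ pointBlock d i ∧ neuronCoord d (2 * (d * i + j) + s) = j := by
  refine ⟨Finset.mem_Ico.mpr ⟨by nlinarith, by nlinarith⟩, ?_⟩
  rw [neuronCoord, Nat.mul_add_div two_pos, Nat.div_eq_of_lt hs, add_zero, Nat.mul_add_mod,
    Nat.mod_eq_of_lt hj]

theorem forall_mem_pointBlock_sign_iff {a b : ℕ → ℝ} :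
    (∀ k ∈ pointBlock d i, 0 ≤ (-1) ^ k * (b (neuronCoord d k) - a (neuronCoord d k))) ↔
      ∀ j < d, a j = b j := by
  refine ⟨fun h j hj => ?_, fun h k hk => ?_⟩
  · obtain ⟨hmem, hcoord⟩ := mem_pointBlock_and_neuronCoord hj two_pos i
    obtain ⟨hmem', hcoord'⟩ := mem_pointBlock_and_neuronCoord hj one_lt_two i
    have hle := h _ hmem
    have hge := h _ hmem'
    rw [hcoord, add_zero, (even_two_mul _).neg_one_pow] at hle
    rw [hcoord', (even_two_mul _).add_one.neg_one_pow] at hge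
    linarith
  · have hcoord := neuronCoord_lt (lt_of_mem_pointBlock hk i.lt_succ_self)
    simp [h _ hcoord]

end Numbering

/-- The layer widths of `memArch d n`. -/
def memWidth (d n : ℕ) : ℕ → ℕ
  | 0 => d
  | 1 => 2 * d * n
  | 2 => n
  | _ => 1

/-- The connections of `memArch d n`. Indices beyond the width of a layer name no neuron and get no
connection. -/
def memIdx (d n : ℕ) : ℕ → ℕ → Finset ℕ
  | 1, k => if k < 2 * d * n then {neuronCoord d k, d} else ∅
  | 2, i => if i < n then insert (2 * d * n) (pointBlock d i) else ∅
  | 3, _ => Finset.range n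
  | _, _ => ∅

theorem memIdx_one {d n k : ℕ} (hk : k < 2 * d * n) : memIdx d n 1 k = {neuronCoord d k, d} :=
  if_pos hk

theorem memIdx_two {d n i : ℕ} (hi : i < n) :
    memIdx d n 2 i = insert (2 * d * n) (pointBlock d i) :=
  if_pos hi

theorem memIdx_succ_subset (d n l k : ℕ) :
    memIdx d n (l + 1) k ⊆ Finset.range (memWidth d n l + 1) := by
  match l with
  | 0 =>
    simp only [memIdx, memWidth]
    split_ifs with hk
    · have := neuronCoord_lt hk
      grind
    · exact Finset.empty_subset _
  | 1 =>
    simp only [memIdx, memWidth]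
    split_ifs with hk
    · refine Finset.insert_subset (by simp) fun j hj => ?_
      exact Finset.mem_range.mpr ((lt_of_mem_pointBlock hj hk).trans (Nat.lt_succ_self _))
    · exact Finset.empty_subset _
  | 2 => exact Finset.range_subset_range.mpr n.le_succ
  | l + 3 => exact Finset.empty_subset _

/-- The architecture memorizing `n` points of `F_p^d`: comparisons of single coordinates, then one
conjunction per data point, then a bias-free linear combination. -/
def memArch (d n : ℕ) : Arch d where
  L := 3
  width := memWidth d n
  input_eq := rfl
  output_eq := rfl
  idx := memIdx d n
  idx_sub := memIdx_succ_subset d n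

section ParameterCount

variable {d n k : ℕ}

theorem card_memIdx_one (hk : k < 2 * d * n) : (memIdx d n 1 k).card = 2 := by
  rw [memIdx_one hk, Finset.card_pair (neuronCoord_lt hk).ne]

theorem card_memIdx_two (hk : k < n) : (memIdx d n 2 k).card = 2 * d + 1 := by
  rw [memIdx_two hk, Finset.card_insert_of_notMem (notMem_pointBlock hk), card_pointBlock]

theorem nParams_memArch (d n : ℕ) : (memArch d n).nParams = 6 * d * n + 2 * n := by
  have hone : ∑ k ∈ Finset.range (2 * d * n), (memIdx d n 1 k).card = 2 * d * n * 2 := by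
    simpa using Finset.sum_const_nat fun k hk => card_memIdx_one (Finset.mem_range.mp hk)
  have htwo : ∑ k ∈ Finset.range n, (memIdx d n 2 k).card = n * (2 * d + 1) := by
    simpa using Finset.sum_const_nat fun k hk => card_memIdx_two (d := d) (Finset.mem_range.mp hk)
  have hthree : ∑ k ∈ Finset.range 1, (memIdx d n 3 k).card = n := by simp [memIdx]
  calc (memArch d n).nParams
      = ∑ k ∈ Finset.range (2 * d * n), (memIdx d n 1 k).card +
        ∑ k ∈ Finset.range n, (memIdx d n 2 k).card +
        ∑ k ∈ Finset.range 1, (memIdx d n 3 k).card := by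
        simp [Arch.nParams, memArch, memWidth, Finset.sum_range_succ]
    _ = 6 * d * n + 2 * n := by rw [hone, htwo, hthree]; ring

end ParameterCount

/-- The parameters with which `memArch d n` memorizes the points `z i` with labels `y i`. Neuron `k`
of the first layer computes `(-1) ^ k * (x j - z i j)`, so that even and odd neurons test the two
opposite inequalities. -/
noncomputable def memParam (d n : ℕ) (z : ℕ → ℕ → ℝ) (y : ℕ → ℝ) : ℕ → ℕ → ℕ → ℝ
  | 1, k, j => (-1) ^ k * if j = d then -z (neuronPoint d k) (neuronCoord d k) else 1
  | 2, _, k => if k = 2 * d * n then -((2 * d : ℕ) : ℝ) else 1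
  | 3, _, i => y i
  | _, _, _ => 0

theorem memParam_mem {p d n : ℕ} (hd : d ≤ 2 ^ p) {z : ℕ → ℕ → ℝ} {y : ℕ → ℝ}
    (hz : ∀ i j, z i j ∈ Fp p) (hy : ∀ i, y i ∈ Fp p) (l i j : ℕ) :
    memParam d n z y l i j ∈ Fp p := by
  unfold memParam
  split
  · refine Fp.neg_one_pow_mul_mem ?_ _
    split_ifs
    exacts [Fp.neg_mem (hz _ _), Fp.one_mem p]
  · split_ifs
    exacts [Fp.neg_mem (Fp.natCast_mem (by rw [pow_succ]; omega)), Fp.one_mem p]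
  · exact hy _
  · exact Fp.zero_mem p

section Evaluation

variable {p d n : ℕ} {rnd : ℝ → ℝ} {z : ℕ → ℕ → ℝ} {y : ℕ → ℝ} {x : ℕ → ℝ}

theorem postAct_memArch_one (hrnd : IsSignExactRounding p rnd) (hz : ∀ i j, z i j ∈ Fp p)
    (hx : ∀ j < d, x j ∈ Fp p) {k : ℕ} (hk : k < 2 * d * n) :
    postAct (memArch d n) stepAct rnd (memParam d n z y) x 1 k =
      stepAct ((-1) ^ k * (x (neuronCoord d k) - z (neuronPoint d k) (neuronCoord d k))) := by
  have hj := neuronCoord_lt hk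
  set v := postAct (memArch d n) stepAct rnd (memParam d n z y) x 0
  have hweight : memParam d n z y 1 k (neuronCoord d k) * v (neuronCoord d k) =
      (-1) ^ k * x (neuronCoord d k) := by
    rw [show v (neuronCoord d k) = x (neuronCoord d k) from postAct_zero hj]
    simp [memParam, hj.ne]
  have hbias : memParam d n z y 1 k d * v d =
      (-1) ^ k * -z (neuronPoint d k) (neuronCoord d k) := by
    rw [show v d = 1 from postAct_bias 0]
    simp [memParam]
  rw [postAct_stepAct_succ (hrnd.eq_self _ (Fp.zero_mem p)) (hrnd.eq_self _ (Fp.one_mem p)) hk]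
  rw [show (memArch d n).idx (0 + 1) k = {neuronCoord d k, d} from memIdx_one hk,
    fpAff_sort_pair hj, stepAct_rnd hrnd.nonneg_iff, hweight, hbias, ← mul_add, ← sub_eq_add_neg]
  · rw [hweight, hrnd.eq_self _ (Fp.neg_one_pow_mul_mem (hx _ hj) k)]
  · rw [hbias, hrnd.eq_self _ (Fp.neg_one_pow_mul_mem (Fp.neg_mem (hz _ _)) k)]

open Classical in
theorem postAct_memArch_two (hd : d ≤ 2 ^ p) (hrnd : IsSignExactRounding p rnd)
    (hz : ∀ i j, z i j ∈ Fp p) (hx : ∀ j < d, x j ∈ Fp p) {i : ℕ} (hi : i < n) :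
    postAct (memArch d n) stepAct rnd (memParam d n z y) x 2 i =
      if ∀ j < d, z i j = x j then 1 else 0 := by
  have hexact : ∀ m : ℤ, |m| ≤ (pointBlock d i).card → rnd m = m := fun m hm =>
    hrnd.eq_self _ (Fp.intCast_mem (hm.trans (by rw [card_pointBlock, pow_succ]; norm_cast; omega)))
  have hfirst : ∀ k ∈ pointBlock d i,
      postAct (memArch d n) stepAct rnd (memParam d n z y) x 1 k =
        stepAct ((-1) ^ k * (x (neuronCoord d k) - z i (neuronCoord d k))) := fun k hk => by
    rw [postAct_memArch_one hrnd hz hx (lt_of_mem_pointBlock hk hi),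
      neuronPoint_of_mem_pointBlock hk]
  rw [postAct_stepAct_succ (hrnd.eq_self _ (Fp.zero_mem p)) (hrnd.eq_self _ (Fp.one_mem p)) hi]
  rw [show (memArch d n).idx (1 + 1) i = insert (2 * d * n) (pointBlock d i) from memIdx_two hi]
  refine stepAct_eq_ite ((fpAff_sort_conj_nonneg_iff (notMem_pointBlock hi) hexact
    (fun k hk => if_neg (lt_of_mem_pointBlock hk hi).ne) ?_ hfirst (postAct_bias 1)).trans
    forall_mem_pointBlock_sign_iff)
  rw [card_pointBlock]
  exact if_pos rfl

theorem evalNet_memArch (hd : d ≤ 2 ^ p) (hrnd : IsSignExactRounding p rnd)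
    (hz : ∀ i j, z i j ∈ Fp p) (hx : ∀ j < d, x j ∈ Fp p) {i : ℕ} (hi : i < n)
    (hy : y i ∈ Fp p) (hxi : ∀ k < n, (∀ j < d, z k j = x j) ↔ k = i) :
    evalNet (memArch d n) stepAct rnd (memParam d n z y) x = y i := by
  refine fpAff_sort_oneHot (Finset.mem_range.mpr hi) (hrnd.eq_self _ (Fp.zero_mem p))
    (hrnd.eq_self _ hy) fun k hk => ?_
  have hk : k < n := Finset.mem_range.mp hk
  refine (postAct_memArch_two hd hrnd hz hx hk).trans ?_
  simp only [hxi k hk]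

end Evaluation

theorem memorization_step_Fp_general (p d n : ℕ) (hd : d ≤ 2 ^ p) :
    ∃ A : Arch d, A.L = 3 ∧ A.nParams = 6 * d * n + 2 * n ∧
      ∀ (z : Fin n → ℕ → ℝ) (y : Fin n → ℝ),
        (∀ i j, j < d → z i j ∈ Fp p) → (∀ i, y i ∈ Fp p) →
        (∀ i k : Fin n, i ≠ k → ∃ j, j < d ∧ z i j ≠ z k j) →
        ∃ θ : ℕ → ℕ → ℕ → ℝ, (∀ l i j, θ l i j ∈ Fp p) ∧
          ∀ rnd : ℝ → ℝ, IsSignExactRounding p rnd →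
            ∀ i, evalNet A stepAct rnd θ (z i) = y i := by
  refine ⟨memArch d n, rfl, nParams_memArch d n, fun z y hz hy hne => ?_⟩
  have hFp : (Fp p).Nonempty := ⟨0, Fp.zero_mem p⟩
  obtain ⟨Z, hZ, hZz⟩ := exists_extension_mem
    (Fin.val_injective.prodMap Fin.val_injective) hFp
    (f := fun q : Fin n × Fin d => z q.1 q.2) fun q => hz q.1 q.2 q.2.isLt
  obtain ⟨Y, hY, hYy⟩ := exists_extension_mem Fin.val_injective hFp hy
  refine ⟨memParam d n (fun i j => Z (i, j)) Y, memParam_mem hd (fun _ _ => hZ _) hY,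
    fun rnd hrnd i => ?_⟩
  have hrecognize : ∀ k < n, (∀ j < d, Z (k, j) = z i j) ↔ k = i := fun k hk => by
    refine ⟨fun h => ?_, ?_⟩
    · by_contra hki
      obtain ⟨j, hj, hzj⟩ := hne ⟨k, hk⟩ i fun hik => hki (congrArg Fin.val hik)
      exact hzj ((hZz (⟨k, hk⟩, ⟨j, hj⟩)).symm.trans (h j hj))
    · rintro rfl j hj
      exact hZz (i, ⟨j, hj⟩)
  rw [evalNet_memArch hd hrnd (fun _ _ => hZ _) (hz i) i.isLt (hY i) hrecognize, hYy]

/-- Memorization by Step networks under `F_p`: for `d ≤ 2^p` there is a fixed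
3-layer Step-network architecture with `6dn + 2n` parameters such that any
dataset of `n` distinct `F_p^d` points with `F_p` labels can be memorized by
some choice of `F_p` parameters, with all arithmetic performed as rounded
floating-point operations in `F_p`. -/
theorem memorization_step_Fp (p d n : ℕ) (hd : d ≤ 2 ^ p) :
    ∃ A : Arch d, A.L = 3 ∧ A.nParams = 6 * d * n + 2 * n ∧
      ∀ rnd : ℝ → ℝ, (∀ r, RoundsTo p r (rnd r)) →
        ∀ (z : Fin n → ℕ → ℝ) (y : Fin n → ℝ),
          (∀ i j, j < d → z i j ∈ Fp p) → (∀ i, y i ∈ Fp p) →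
          (∀ i k : Fin n, i ≠ k → ∃ j, j < d ∧ z i j ≠ z k j) →
          ∃ θ : ℕ → ℕ → ℕ → ℝ, (∀ l i j, θ l i j ∈ Fp p) ∧
            ∀ i, evalNet A stepAct rnd θ (z i) = y i := by
  obtain ⟨A, hL, hA, hmem⟩ := memorization_step_Fp_general p d n hd
  refine ⟨A, hL, hA, fun rnd hrnd z y hz hy hne => ?_⟩
  obtain ⟨θ, hθ, heval⟩ := hmem z y hz hy hne
  exact ⟨θ, hθ, heval rnd (isSignExactRounding_of_roundsTo hrnd)⟩
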